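/- Let x ∈ ℝ^{n_1×…×n_d} and for i = 2,…,d let W_i be tensors (W_d ∈ ℝ^{s_{d-1}×n_d}, W_i ∈ ℝ^{s_{i-1}×n_i×s_i} for 2 ≤ i ≤ d−1) such that each matricization Q_i := M_{{1}}(W_i)^T-type flattening separating the first mode from the rest has orthonormal rows (Q_i Q_i^T = I_{s_{i-1}}). Define b_{d+1} := x, b_i := b_{i+1} contracted with W_i over the matching trailing modes, B_i := M_{{1,…,i-1}}(b_i)^T, and let P_{2..d}(x) := x ∘_{(2,…,d),(2,…,d)} ((W_2∘…∘W_d) ∘_{1,1} (W_2∘…∘W_d)). Then P_{2..d} is an orthogonal projection and ‖x − P_{2..d}(x)‖² = Σ_{i=2}^{d} ‖(I − Q_i^T Q_i) B_{i+1}‖_F², where ‖·‖ denotes the Euclidean (Frobenius) norm. -/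

import Mathlib

open MeasureTheory ProbabilityTheory

/-- The index type for the first `j` modes of an order `d` tensor. -/
def PIdx (d : ℕ) (n : Fin d → ℕ) (j : ℕ) : Type := (k : Fin d) → k.val < j → Fin (n k)

/-- The index type for the modes `j, …, d-1` of an order `d` tensor. -/
def SIdx (d : ℕ) (n : Fin d → ℕ) (j : ℕ) : Type := (k : Fin d) → j ≤ k.val → Fin (n k)

instance (d : ℕ) (n : Fin d → ℕ) (j : ℕ) : Fintype (PIdx d n j) := by
  unfold PIdx; infer_instance

instance (d : ℕ) (n : Fin d → ℕ) (j : ℕ) : Fintype (SIdx d n j) := by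
  unfold SIdx; infer_instance

/-- Append one further index to a prefix-index. -/
def PIdx.snoc {d : ℕ} {n : Fin d → ℕ} {j : ℕ} (i : PIdx d n j) (k0 : Fin d)
    (h : k0.val = j) (μ : Fin (n k0)) : PIdx d n (j + 1) := fun k hk =>
  if hlt : k.val < j then i k hlt
  else
    have hkk : k = k0 := Fin.ext (by omega)
    Fin.cast (congrArg n hkk).symm μ

/-- The chain (tensor train) contraction of the components `W c, …, W (d-1)`:
a tensor with one bond mode of dimension `q c` and the physical modes `c, …, d-1`;
`m` is the number of physical modes, i.e. `c + m = d`. -/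
def chainT (d : ℕ) (n : Fin d → ℕ) (q : ℕ → ℕ)
    (W : (k : ℕ) → (hk : k < d) → Fin (q k) → Fin (n ⟨k, hk⟩) → Fin (q (k + 1)) → ℝ) :
    (m c : ℕ) → c + m = d → Fin (q c) → SIdx d n c → ℝ
  | 0, _, _ => fun _ _ => 1
  | m + 1, c, h => fun α j =>
      have hc : c < d := by omega
      ∑ β : Fin (q (c + 1)),
        W c hc α (j ⟨c, hc⟩ (le_refl c)) β *
          chainT d n q W m (c + 1) (by omega) β (fun k hk => j k (by omega))

/-- Merge a full prefix (taken from `i`) with a suffix index `j`. -/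
def mergeIdx {d : ℕ} {n : Fin d → ℕ} (c : ℕ) (i : ∀ k : Fin d, Fin (n k))
    (j : SIdx d n c) : ∀ k : Fin d, Fin (n k) := fun k =>
  if h : c ≤ k.val then j k h else i k

/-- The orthogonal projection `z ↦ z ∘_{(c+1,…,d),(c+1,…,d)}
`((W_c∘…∘W_{d-1}) ∘_{1,1} (W_c∘…∘W_{d-1}))` (0-based modes `c, …, d-1`). -/
noncomputable def Pmap (d : ℕ) (n : Fin d → ℕ) (q : ℕ → ℕ)
    (W : (k : ℕ) → (hk : k < d) → Fin (q k) → Fin (n ⟨k, hk⟩) → Fin (q (k + 1)) → ℝ)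
    (m c : ℕ) (h : c + m = d) (z : (∀ k : Fin d, Fin (n k)) → ℝ) :
    (∀ k : Fin d, Fin (n k)) → ℝ := fun i =>
  ∑ α : Fin (q c), ∑ j : SIdx d n c,
    z (mergeIdx c i j) * chainT d n q W m c h α j *
      chainT d n q W m c h α (fun k _ => i k)

/-- A tensor train representation of `x` with rank tuple `ρ`. -/
def IsTTRepr (d : ℕ) (n : Fin d → ℕ) (x : (∀ k : Fin d, Fin (n k)) → ℝ)
    (ρ : Fin (d + 1) → ℕ) : Prop :=
  ρ 0 = 1 ∧ ρ (Fin.last d) = 1 ∧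
    ∃ Gc : (k : Fin d) → Fin (n k) → Fin (ρ k.castSucc) → Fin (ρ k.succ) → ℝ,
      ∀ i, x i = ∑ jj : (∀ m : Fin (d + 1), Fin (ρ m)),
        ∏ k : Fin d, Gc k (i k) (jj k.castSucc) (jj k.succ)

/-- `x` has TT-rank at most `(r, …, r)`. -/
def TTRankLe (d : ℕ) (n : Fin d → ℕ) (x : (∀ k : Fin d, Fin (n k)) → ℝ) (r : ℕ) : Prop :=
  ∃ ρ, IsTTRepr d n x ρ ∧ ∀ m : Fin (d + 1), 0 < m.val → m.val < d → ρ m ≤ r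

/-!
Matricize at bond `c`, with the modes before it in the rows. There `Pmap` is right multiplication by
`TᵀT`, where the rows of `T` are the contracted chain `W_c ∘ ⋯ ∘ W_{d-1}`. Since
`T_c = Q_c (1 ⊗ T_{c+1})`, orthonormality of the rows of the `Q_k` passes to `T`, and unrolling
`C_c = C_{c+1} ∘ W_c` gives `C_c = X_c T_cᵀ`, with `X_c` the matricization of `x`. Pythagoras for a
matrix with orthonormal rows is then used twice: for `T_1` it gives
`‖x - P x‖² = ‖x‖² - ‖C_1‖²`, and for `Q_k` it turns the `k`-th summand into
`‖C_{k+1}‖² - ‖C_k‖²`, so that the sum telescopes.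
-/

namespace TensorTrain

open Matrix
open scoped Kronecker

theorem sum_fin_ite_one_le_sub {G : Type*} [AddCommGroup G] (f : ℕ → G) {d : ℕ} (hd : 1 ≤ d) :
    (∑ k : Fin d, if 1 ≤ k.val then f (k.val + 1) - f k.val else 0) = f d - f 1 := by
  obtain ⟨e, rfl⟩ := Nat.exists_eq_add_of_le' hd
  simpa [Fin.sum_univ_succ, Fin.sum_univ_eq_sum_range fun k => f (k + 1 + 1) - f (k + 1)] using
    Finset.sum_range_sub (fun k => f (k + 1)) e

section OrthonormalRows

variable {ι κ μ R : Type*} [Fintype κ] [Fintype μ]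

theorem trace_mul_transpose [Fintype ι] [NonUnitalSemiring R] (A B : Matrix ι κ R) :
    (A * Bᵀ).trace = ∑ i, ∑ j, A i j * B i j :=
  (sum_hadamard_eq A B).symm

variable [DecidableEq μ]

theorem mul_transpose_mul_idem [Semiring R] {Q : Matrix μ κ R} (hQ : Q * Qᵀ = 1)
    (Z : Matrix ι κ R) : Z * Qᵀ * Q * Qᵀ * Q = Z * Qᵀ * Q := by
  rw [Matrix.mul_assoc (Z * Qᵀ) Q, hQ, Matrix.mul_one]

theorem residual_mul_transpose_residual [CommRing R] {Q : Matrix μ κ R} (hQ : Q * Qᵀ = 1)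
    (Z : Matrix ι κ R) :
    (Z - Z * Qᵀ * Q) * (Z - Z * Qᵀ * Q)ᵀ = Z * Zᵀ - Z * Qᵀ * (Z * Qᵀ)ᵀ := by
  have hcancel : Q * (Qᵀ * (Q * Zᵀ)) = Q * Zᵀ := by rw [← Matrix.mul_assoc, hQ, Matrix.one_mul]
  simp only [transpose_sub, transpose_mul, transpose_transpose, Matrix.sub_mul, Matrix.mul_sub,
    Matrix.mul_assoc, hcancel, sub_self, sub_zero]

end OrthonormalRows

section Indices

variable {d : ℕ} {n : Fin d → ℕ}

/-- The bijection between multi-indices and pairs of their parts before and from mode `c` on. -/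
def splitEquiv (c : ℕ) : (∀ k : Fin d, Fin (n k)) ≃ PIdx d n c × SIdx d n c where
  toFun i := (fun k _ => i k, fun k _ => i k)
  invFun p k := if h : c ≤ k.val then p.2 k h else p.1 k (not_le.mp h)
  left_inv i := by funext k; simp
  right_inv p := by
    refine Prod.ext (funext₂ fun k hk => ?_) (funext₂ fun k hk => ?_)
    · simp [not_le.mpr hk]
    · simp [hk]

/-- The bijection `PIdx.snoc`, moving mode `k` into the prefix. -/
def snocEquiv (k : Fin d) : PIdx d n k.val × Fin (n k) ≃ PIdx d n (k.val + 1) where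
  toFun p := p.1.snoc k rfl p.2
  invFun i := (fun l hl => i l (Nat.lt_succ_of_lt hl), i k (Nat.lt_succ_self k.val))
  left_inv p := by
    refine Prod.ext (funext₂ fun l hl => ?_) ?_
    · simp [PIdx.snoc, hl]
    · simp [PIdx.snoc]
  right_inv i := by
    funext l hl
    by_cases h : l.val < k.val
    · simp [PIdx.snoc, h]
    · obtain rfl : l = k := Fin.ext (by omega)
      simp [PIdx.snoc]

/-- The bijection moving mode `k` into the suffix, the counterpart of `snocEquiv`. -/
def consEquiv (k : Fin d) : Fin (n k) × SIdx d n (k.val + 1) ≃ SIdx d n k.val where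
  toFun p l hl :=
    if h : k.val + 1 ≤ l.val then p.2 l h
    else
      have hlk : l = k := Fin.ext (by omega)
      Fin.cast (congrArg n hlk).symm p.1
  invFun j := (j k le_rfl, fun l hl => j l (Nat.le_of_succ_le hl))
  left_inv p := by
    refine Prod.ext ?_ (funext₂ fun l hl => ?_)
    · simp
    · simp [hl]
  right_inv j := by
    funext l hl
    by_cases h : k.val + 1 ≤ l.val
    · simp [h]
    · obtain rfl : l = k := Fin.ext (by omega)
      simp

theorem splitEquiv_symm_consEquiv (k : Fin d) (i : PIdx d n k.val) (μ : Fin (n k))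
    (j : SIdx d n (k.val + 1)) :
    (splitEquiv k.val).symm (i, consEquiv k (μ, j)) =
      (splitEquiv (k.val + 1)).symm (i.snoc k rfl μ, j) := by
  funext l
  simp only [splitEquiv, PIdx.snoc, Equiv.coe_fn_symm_mk]
  by_cases hlt : k.val + 1 ≤ l.val
  · rw [dif_pos hlt, dif_pos (Nat.le_of_succ_le hlt)]
    exact dif_pos hlt
  · by_cases hle : k.val ≤ l.val
    · rw [dif_neg hlt, dif_pos hle, dif_neg (not_lt.mpr hle)]
      exact dif_neg hlt
    · rw [dif_neg hlt, dif_neg hle, dif_pos (not_le.mp hle)]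

theorem mergeIdx_splitEquiv_symm (c : ℕ) (i : PIdx d n c) (j j' : SIdx d n c) :
    mergeIdx c ((splitEquiv c).symm (i, j)) j' = (splitEquiv c).symm (i, j') := by
  funext k
  by_cases hk : c ≤ k.val <;> simp [mergeIdx, splitEquiv, hk]

instance : Unique (SIdx d n d) where
  default k hk := absurd hk (not_le.mpr k.isLt)
  uniq _ := funext₂ fun k hk => absurd hk (not_le.mpr k.isLt)

end Indices

section Matricization

variable {d : ℕ} {n : Fin d → ℕ} {β γ R : Type*}

/-- The matricization of a tensor with the modes before `c` in the rows. -/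
def matricize (c : ℕ) (z : (∀ k : Fin d, Fin (n k)) → R) :
    Matrix (PIdx d n c) (SIdx d n c) R :=
  of fun i j => z ((splitEquiv c).symm (i, j))

/-- The regrouping of a matrix that moves mode `k`, the last one of the row index, to the front of
the column index: it takes `b_{k+1}`, matricized at its bond, to the matrix `B_{k+1}` on which the
flattening of `W_k` acts. -/
def regroup (k : Fin d) (M : Matrix (PIdx d n (k.val + 1)) β R) :
    Matrix (PIdx d n k.val) (Fin (n k) × β) R :=
  of fun i p => M (i.snoc k rfl p.1) p.2

/-- The flattening of an order three tensor separating its first mode from the other two. -/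
def flattening {α : Type*} (T : α → β → γ → R) : Matrix α (β × γ) R :=
  of fun a p => T a p.1 p.2

theorem matricize_injective (c : ℕ) :
    Function.Injective
      (matricize c : ((∀ k : Fin d, Fin (n k)) → R) → Matrix (PIdx d n c) (SIdx d n c) R) := by
  intro z y h
  funext i
  simpa [matricize] using congrFun₂ h (splitEquiv c i).1 (splitEquiv c i).2

theorem matricize_last_apply (z : (∀ k : Fin d, Fin (n k)) → R) (i : PIdx d n d)
    (j : SIdx d n d) : matricize d z i j = z fun k => i k k.isLt :=
  congrArg z (funext fun k => dif_neg (not_le.mpr k.isLt))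

theorem matricize_submatrix_consEquiv (k : Fin d) (z : (∀ k : Fin d, Fin (n k)) → R) :
    (matricize k.val z).submatrix id (consEquiv k) = regroup k (matricize (k.val + 1) z) := by
  ext i ⟨μ, j⟩
  exact congrArg z (splitEquiv_symm_consEquiv k i μ j)

theorem regroup_mul [Fintype β] [NonAssocSemiring R] (k : Fin d)
    (M : Matrix (PIdx d n (k.val + 1)) β R) (N : Matrix β γ R) :
    regroup k (M * N) = regroup k M * ((1 : Matrix (Fin (n k)) (Fin (n k)) R) ⊗ₖ N) := by
  ext i ⟨μ, c⟩
  simp [regroup, Matrix.mul_apply, Fintype.sum_prod_type, kroneckerMap_apply, Matrix.one_apply]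

theorem trace_matricize_mul_transpose [NonUnitalSemiring R] (c : ℕ)
    (z y : (∀ k : Fin d, Fin (n k)) → R) :
    (matricize c z * (matricize c y)ᵀ).trace = ∑ i, z i * y i := by
  rw [trace_mul_transpose, ← Fintype.sum_prod_type']
  exact (splitEquiv c).symm.sum_comp fun i => z i * y i

theorem trace_regroup_mul_transpose [Fintype β] [NonUnitalSemiring R] (k : Fin d)
    (M : Matrix (PIdx d n (k.val + 1)) β R) :
    (regroup k M * (regroup k M)ᵀ).trace = (M * Mᵀ).trace := by
  rw [trace_mul_transpose, trace_mul_transpose, ← (snocEquiv k).sum_comp, Fintype.sum_prod_type]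
  exact Finset.sum_congr rfl fun i _ => Fintype.sum_prod_type _

theorem trace_mul_transpose_eq_sum_mul_self [Fintype β] [Semiring R]
    {x : (∀ k : Fin d, Fin (n k)) → R} {B : Matrix (PIdx d n d) β R} (hβ : Fintype.card β = 1)
    (hB : ∀ i b, B i b = x fun k => i k k.isLt) : (B * Bᵀ).trace = ∑ i, x i * x i := by
  rw [← trace_matricize_mul_transpose d, trace_mul_transpose, trace_mul_transpose]
  simp [hB, hβ, matricize_last_apply]

theorem sum_residual_flattening_sq {α : Type*} [Fintype α] [DecidableEq α] [Fintype β] [CommRing R]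
    (k : Fin d) {T : α → Fin (n k) → β → R} {A : Matrix (PIdx d n k.val) α R}
    {B : Matrix (PIdx d n (k.val + 1)) β R} (hT : flattening T * (flattening T)ᵀ = 1)
    (hA : A = regroup k B * (flattening T)ᵀ) :
    (∑ i, ∑ μ, ∑ b, (B (i.snoc k rfl μ) b - ∑ a, T a μ b * A i a) ^ 2) =
      (B * Bᵀ).trace - (A * Aᵀ).trace := by
  rw [← trace_regroup_mul_transpose k B, hA, ← trace_sub, ← residual_mul_transpose_residual hT,
    ← hA, trace_mul_transpose]
  simp [Fintype.sum_prod_type, Matrix.mul_apply (M := A), ← sq, regroup, flattening, mul_comm]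

end Matricization

section Chain

variable {d : ℕ} {n : Fin d → ℕ} {q : ℕ → ℕ}
  {W : (k : ℕ) → (hk : k < d) → Fin (q k) → Fin (n ⟨k, hk⟩) → Fin (q (k + 1)) → ℝ}
  {m c : ℕ}

variable (W) in
/-- The contracted chain `chainT` as a matrix whose rows are indexed by the leading bond. -/
def chainMatrix (h : c + m = d) : Matrix (Fin (q c)) (SIdx d n c) ℝ :=
  of (chainT d n q W m c h)

theorem chainMatrix_submatrix_consEquiv (h : c + (m + 1) = d) (hc : c < d) :
    (chainMatrix W h).submatrix id (consEquiv ⟨c, hc⟩) =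
      flattening (W c hc) * ((1 : Matrix (Fin (n ⟨c, hc⟩)) (Fin (n ⟨c, hc⟩)) ℝ) ⊗ₖ
        chainMatrix W (m := m) (c := c + 1) (by omega)) := by
  ext α ⟨μ, j⟩
  have hμj := (consEquiv ⟨c, hc⟩).symm_apply_apply (μ, j)
  have hμ : consEquiv ⟨c, hc⟩ (μ, j) ⟨c, hc⟩ le_rfl = μ := congrArg Prod.fst hμj
  have hj : (fun k hk => consEquiv ⟨c, hc⟩ (μ, j) k (Nat.le_of_succ_le hk)) = j :=
    congrArg Prod.snd hμj
  simp [chainMatrix, chainT, flattening, Matrix.mul_apply, Fintype.sum_prod_type,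
    kroneckerMap_apply, Matrix.one_apply, hμ, hj]

theorem chainMatrix_mul_transpose (hqd : q d = 1) (h : c + m = d)
    (hQ : ∀ k (hk : k < d), c ≤ k → flattening (W k hk) * (flattening (W k hk))ᵀ = 1) :
    chainMatrix W h * (chainMatrix W h)ᵀ = 1 := by
  induction m generalizing c with
  | zero =>
    obtain rfl : c = d := h
    have : Subsingleton (Fin (q c)) := by rw [hqd]; infer_instance
    ext α α'
    simp [chainMatrix, chainT, Matrix.mul_apply, Subsingleton.elim α α', Matrix.one_apply]
  | succ m ih =>
    have hc : c < d := by omega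
    have hT := ih (c := c + 1) (by omega) fun k hk hck => hQ k hk (by omega)
    rw [← submatrix_id_id (_ * _), ← submatrix_mul_equiv _ _ id (consEquiv ⟨c, hc⟩) id,
      ← transpose_submatrix, chainMatrix_submatrix_consEquiv h hc, transpose_mul,
      ← Matrix.mul_assoc, Matrix.mul_assoc (flattening _), ← kroneckerMap_transpose,
      ← mul_kronecker_mul, hT, transpose_one, Matrix.one_mul, one_kronecker_one, Matrix.mul_one,
      hQ c hc le_rfl]

theorem eq_matricize_mul_chainMatrix_transpose {x : (∀ k : Fin d, Fin (n k)) → ℝ}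
    {C : (k : ℕ) → Matrix (PIdx d n k) (Fin (q k)) ℝ} (h : c + m = d)
    (hbase : ∀ i β, C d i β = x fun k => i k k.isLt)
    (hstep : ∀ k (hk : k < d), c ≤ k →
      C k = regroup ⟨k, hk⟩ (C (k + 1)) * (flattening (W k hk))ᵀ) :
    C c = matricize c x * (chainMatrix W h)ᵀ := by
  induction m generalizing c with
  | zero =>
    obtain rfl : c = d := h
    ext i β
    simp [hbase, chainMatrix, chainT, matricize_last_apply, Matrix.mul_apply]
  | succ m ih =>
    have hc : c < d := by omega
    have hC := ih (c := c + 1) (by omega) fun k hk hck => hstep k hk (by omega)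
    rw [hstep c hc le_rfl, hC, regroup_mul, ← submatrix_id_id (matricize _ _ * _),
      ← submatrix_mul_equiv _ _ id (consEquiv ⟨c, hc⟩) id, ← transpose_submatrix,
      chainMatrix_submatrix_consEquiv h hc, transpose_mul, ← kroneckerMap_transpose,
      transpose_one, ← Matrix.mul_assoc, matricize_submatrix_consEquiv ⟨c, hc⟩]

theorem matricize_pmap (h : c + m = d) (z : (∀ k : Fin d, Fin (n k)) → ℝ) :
    matricize c (Pmap d n q W m c h z) =
      matricize c z * (chainMatrix W h)ᵀ * chainMatrix W h := by
  ext i j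
  have hj : (fun k _ => (splitEquiv c).symm (i, j) k) = j :=
    congrArg Prod.snd ((splitEquiv c).apply_symm_apply (i, j))
  simp [matricize, Pmap, chainMatrix, Matrix.mul_apply, Finset.sum_mul,
    mergeIdx_splitEquiv_symm, hj]

theorem pmap_pmap (h : c + m = d) (hT : chainMatrix W h * (chainMatrix W h)ᵀ = 1)
    (z : (∀ k : Fin d, Fin (n k)) → ℝ) :
    Pmap d n q W m c h (Pmap d n q W m c h z) = Pmap d n q W m c h z := by
  apply matricize_injective c
  simp only [matricize_pmap, mul_transpose_mul_idem hT]

theorem sum_pmap_mul_eq_sum_mul_pmap (h : c + m = d) (z y : (∀ k : Fin d, Fin (n k)) → ℝ) :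
    ∑ i, Pmap d n q W m c h z i * y i = ∑ i, z i * Pmap d n q W m c h y i := by
  simp only [← trace_matricize_mul_transpose c, matricize_pmap, transpose_mul,
    transpose_transpose, Matrix.mul_assoc]

theorem sum_sub_pmap_sq (h : c + m = d) (hT : chainMatrix W h * (chainMatrix W h)ᵀ = 1)
    (x : (∀ k : Fin d, Fin (n k)) → ℝ) :
    ∑ i, (x i - Pmap d n q W m c h x i) ^ 2 =
      ∑ i, x i * x i -
        (matricize c x * (chainMatrix W h)ᵀ * (matricize c x * (chainMatrix W h)ᵀ)ᵀ).trace := by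
  have hsub : matricize c (x - Pmap d n q W m c h x) =
      matricize c x - matricize c x * (chainMatrix W h)ᵀ * chainMatrix W h := by
    rw [← matricize_pmap]
    rfl
  calc ∑ i, (x i - Pmap d n q W m c h x i) ^ 2
      = (matricize c (x - Pmap d n q W m c h x) *
          (matricize c (x - Pmap d n q W m c h x))ᵀ).trace := by
        simp only [trace_matricize_mul_transpose, Pi.sub_apply, sq]
    _ = ∑ i, x i * x i -
        (matricize c x * (chainMatrix W h)ᵀ * (matricize c x * (chainMatrix W h)ᵀ)ᵀ).trace := by
        rw [hsub, residual_mul_transpose_residual hT, trace_sub, trace_matricize_mul_transpose]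

end Chain

end TensorTrain

open TensorTrain Matrix

/-- **Error decomposition for nested orthogonal range approximations** (the key identity
in the proof of the randomized TT-SVD error bound).

Let `W_k ∈ ℝ^{q_k × n_k × q_{k+1}}` (0-based `k = 1, …, d-1`, trailing dummy bond
`q d = 1`) be component tensors whose flattenings `Q_k` (first mode versus the rest) have
orthonormal rows, let `b_{d+1} = x` and let `b_k = b_{k+1} ∘ W_k` be the successively
contracted tensors (`C (k) = b_{k+1}`), and let
`P_{2..d} : z ↦ z ∘_{(2,…,d),(2,…,d)} ((W_2∘…∘W_d) ∘_{1,1} (W_2∘…∘W_d))` be the induced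
map.  Then `P_{2..d}` is an orthogonal projection and
`‖x − P_{2..d}(x)‖² = Σ_{i=2}^{d} ‖(I − Q_iᵀ Q_i) B_{i+1}‖²`, where
`‖(I − Q_kᵀ Q_k) B_{k+1}‖²` is written out entrywise as the squared Frobenius norm of
`b_{k+1}` minus its projection `(b_k) ∘ W_k` onto the span of `W_k`. -/
theorem error_decomposition_nested_range_approx
    (d : ℕ) (hd : 1 ≤ d) (n : Fin d → ℕ) (q : ℕ → ℕ) (hqd : q d = 1)
    (x : (∀ k : Fin d, Fin (n k)) → ℝ)
    (W : (k : ℕ) → (hk : k < d) → Fin (q k) → Fin (n ⟨k, hk⟩) → Fin (q (k + 1)) → ℝ)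
    (C : (m : ℕ) → PIdx d n m → Fin (q m) → ℝ)
    -- the flattenings `Q_k` of the `W_k` have orthonormal rows
    (hOrtho : ∀ k (h1 : 1 ≤ k) (hk : k < d) (α α' : Fin (q k)),
      (∑ μ : Fin (n ⟨k, hk⟩), ∑ β : Fin (q (k + 1)), W k hk α μ β * W k hk α' μ β)
        = if α = α' then 1 else 0)
    -- `b_{d+1} = x`
    (hCbase : ∀ (i : PIdx d n d) (β : Fin (q d)), C d i β = x (fun k => i k k.isLt))
    -- `b_k = b_{k+1} ∘ W_k`
    (hCrec : ∀ k (h1 : 1 ≤ k) (hk : k < d) (i : PIdx d n k) (α : Fin (q k)),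
      C k i α = ∑ μ : Fin (n ⟨k, hk⟩), ∑ β : Fin (q (k + 1)),
        C (k + 1) (PIdx.snoc i ⟨k, hk⟩ rfl μ) β * W k hk α μ β) :
    (∀ (z : (∀ k : Fin d, Fin (n k)) → ℝ) (i : ∀ k : Fin d, Fin (n k)),
        Pmap d n q W (d - 1) 1 (by omega) (Pmap d n q W (d - 1) 1 (by omega) z) i =
          Pmap d n q W (d - 1) 1 (by omega) z i) ∧
      (∀ z y : (∀ k : Fin d, Fin (n k)) → ℝ,
        (∑ i, Pmap d n q W (d - 1) 1 (by omega) z i * y i) =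
          ∑ i, z i * Pmap d n q W (d - 1) 1 (by omega) y i) ∧
      (∑ i, (x i - Pmap d n q W (d - 1) 1 (by omega) x i) ^ 2) =
        ∑ k : Fin d, if h : 1 ≤ k.val then
          (∑ i : PIdx d n k.val, ∑ μ : Fin (n k), ∑ β : Fin (q (k.val + 1)),
            (C (k.val + 1) (PIdx.snoc i k rfl μ) β
              - ∑ α : Fin (q k.val), W k.val k.isLt α μ β * C k.val i α) ^ 2)
        else 0 := by
  have hQ : ∀ k (hk : k < d), 1 ≤ k → flattening (W k hk) * (flattening (W k hk))ᵀ = 1 := by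
    intro k hk h1
    ext α α'
    simpa [Matrix.mul_apply, flattening, Fintype.sum_prod_type, Matrix.one_apply]
      using hOrtho k h1 hk α α'
  have hstep : ∀ k (hk : k < d), 1 ≤ k →
      of (C k) = regroup ⟨k, hk⟩ (of (C (k + 1))) * (flattening (W k hk))ᵀ := by
    intro k hk h1
    ext i α
    simpa [Matrix.mul_apply, flattening, regroup, Fintype.sum_prod_type] using hCrec k h1 hk i α
  have hT := chainMatrix_mul_transpose hqd (Nat.add_sub_cancel' hd) hQ
  refine ⟨fun z => congrFun (pmap_pmap _ hT z), sum_pmap_mul_eq_sum_mul_pmap _, ?_⟩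
  have hC1 := eq_matricize_mul_chainMatrix_transpose (C := fun k => of (C k))
    (Nat.add_sub_cancel' hd) hCbase hstep
  have hCd := trace_mul_transpose_eq_sum_mul_self (B := of (C d)) (by simp [hqd]) hCbase
  rw [sum_sub_pmap_sq _ hT, ← hC1, ← hCd,
    ← sum_fin_ite_one_le_sub (fun k => (of (C k) * (of (C k))ᵀ).trace) hd]
  refine Finset.sum_congr rfl fun k _ => ?_
  split_ifs with h1
  · exact (sum_residual_flattening_sq k (hQ k k.isLt h1) (hstep k k.isLt h1)).symm
  · rfl
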